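/- For every N ≥ 1, all real a, b, and every u ∈ C_0^∞(ℝ^N\{0}): (∫ |u|²/|x|^{2a} dx)·(∫ |∇u|²/|x|^{2b} dx) ≥ min{(N−(a+b+1))²/4, (N−(3b−a+3))²/4}·(∫ |u|²/|x|^{a+b+1} dx)². -/

import Mathlib

open MeasureTheory Real Filter
open scoped Topology

/-!
By the divergence theorem for the field `|x|^s |u|² x`, the integral of `|x|^s ⟨u, x·∇u⟩` equals
`-(N + s) / 2` times that of `|x|^s |u|²`. With `s = -(a + b + 1)` and the weight distributed over
the two factors as `|x|^(-a) u` and `|x|^(-b-1) x·∇u`, Cauchy–Schwarz yields the refined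
inequality, in which only the radial derivative `x·∇u` occurs. The inequality for the full gradient
follows from `|x·∇u| ≤ |x| |∇u|`, with the constant `(N - (a + b + 1))² / 4`, which is at least the
minimum.
-/

open Module (finrank)
open scoped RealInnerProductSpace

theorem sq_integral_inner_le {X F : Type*} [MeasurableSpace X] {μ : Measure X}
    [NormedAddCommGroup F] [InnerProductSpace ℝ F] {f g : X → F}
    (hf : MemLp f 2 μ) (hg : MemLp g 2 μ) :
    (∫ x, ⟪f x, g x⟫ ∂μ) ^ 2 ≤ (∫ x, ‖f x‖ ^ 2 ∂μ) * ∫ x, ‖g x‖ ^ 2 ∂μ := by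
  have inner_toLp {f g : X → F} (hf : MemLp f 2 μ) (hg : MemLp g 2 μ) :
      ⟪hf.toLp f, hg.toLp g⟫ = ∫ x, ⟪f x, g x⟫ ∂μ := by
    rw [L2.inner_def]
    refine integral_congr_ae ?_
    filter_upwards [hf.coeFn_toLp, hg.coeFn_toLp] with x hfx hgx
    rw [hfx, hgx]
  have h := real_inner_mul_inner_self_le (hf.toLp f) (hg.toLp g)
  simpa only [inner_toLp, real_inner_self_eq_norm_sq, ← pow_two] using h

section Support

variable {E F : Type*} [NormedAddCommGroup E] [NormedAddCommGroup F]

theorem tsupport_norm_sq_subset (u : E → F) : tsupport (fun x => ‖u x‖ ^ 2) ⊆ tsupport u :=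
  tsupport_comp_subset (g := fun y => ‖y‖ ^ 2) (by simp) u

variable [NormedSpace ℝ E] [NormedSpace ℝ F]

theorem support_fderiv_apply_self_subset (u : E → F) :
    Function.support (fun x => fderiv ℝ u x x) ⊆ Function.support (fderiv ℝ u) :=
  fun x hx h => hx (by simp [h])

theorem tsupport_fderiv_apply_self_subset (u : E → F) :
    tsupport (fun x => fderiv ℝ u x x) ⊆ tsupport u :=
  (closure_mono (support_fderiv_apply_self_subset u)).trans (tsupport_fderiv_subset ℝ)

end Support

section EulerIdentity

variable {E F : Type*} [NormedAddCommGroup E] [NormedSpace ℝ E] [MeasurableSpace E] [BorelSpace E]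
  {μ : Measure E} [NormedAddCommGroup F] [NormedSpace ℝ F] {g : E → F}

theorem integrable_apply_smul_fderiv [IsFiniteMeasureOnCompacts μ] (hg : ContDiff ℝ 1 g)
    (hcs : HasCompactSupport g) (ℓ : E →L[ℝ] ℝ) (v : E) :
    Integrable (fun x => ℓ x • fderiv ℝ g x v) μ :=
  (ℓ.continuous.smul ((hg.continuous_fderiv one_ne_zero).clm_apply
    continuous_const)).integrable_of_hasCompactSupport (hcs.fderiv_apply ℝ v).smul_left

variable [FiniteDimensional ℝ E] [μ.IsAddHaarMeasure]

theorem integral_apply_smul_fderiv (hg : ContDiff ℝ 1 g) (hcs : HasCompactSupport g)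
    (ℓ : E →L[ℝ] ℝ) (v : E) :
    ∫ x, ℓ x • fderiv ℝ g x v ∂μ = -(ℓ v • ∫ x, g x ∂μ) := by
  have hint : Integrable (fun x => fderiv ℝ ℓ x v • g x) μ := by
    simpa only [ContinuousLinearMap.fderiv] using
      (hg.continuous.integrable_of_hasCompactSupport hcs).fun_smul (ℓ v)
  have hparts := integral_smul_fderiv_eq_neg_fderiv_smul_of_integrable hint
    (integrable_apply_smul_fderiv hg hcs ℓ v)
    ((ℓ.continuous.smul hg.continuous).integrable_of_hasCompactSupport hcs.smul_left)
    (fun _ _ => ℓ.differentiableAt) (fun x _ => hg.differentiable one_ne_zero x)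
  simpa only [ContinuousLinearMap.fderiv, integral_smul] using hparts

theorem integral_fderiv_apply_self (hg : ContDiff ℝ 1 g) (hcs : HasCompactSupport g) :
    ∫ x, fderiv ℝ g x x ∂μ = -((finrank ℝ E : ℝ) • ∫ x, g x ∂μ) := by
  let B := Module.finBasis ℝ E
  let coord i : E →L[ℝ] ℝ := (B.coord i).toContinuousLinearMap
  have hcoord i : coord i (B i) = 1 := by simp [coord]
  have hsum (x : E) : fderiv ℝ g x x = ∑ i, coord i x • fderiv ℝ g x (B i) := by
    conv_lhs => rw [← B.sum_repr x, map_sum]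
    simp [coord, B.sum_repr]
  calc
    _ = ∑ i, ∫ x, coord i x • fderiv ℝ g x (B i) ∂μ := by
      simp only [hsum]
      exact integral_finsetSum _ fun i _ => integrable_apply_smul_fderiv hg hcs (coord i) (B i)
    _ = ∑ _i : Fin (finrank ℝ E), -∫ x, g x ∂μ := by
      simp only [integral_apply_smul_fderiv hg hcs, hcoord, one_smul]
    _ = _ := by simp [Nat.cast_smul_eq_nsmul]

end EulerIdentity

section PowerWeight

theorem norm_norm_rpow_smul_sq {E F : Type*} [SeminormedAddCommGroup E]
    [SeminormedAddCommGroup F] [NormedSpace ℝ F] (s : ℝ) (x : E) (y : F) :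
    ‖‖x‖ ^ s • y‖ ^ 2 = ‖x‖ ^ (2 * s) * ‖y‖ ^ 2 := by
  rw [norm_smul, mul_pow, Real.norm_of_nonneg (by positivity), mul_comm 2 s,
    rpow_mul (norm_nonneg x), rpow_two]

variable {E F : Type*} [NormedAddCommGroup E] [InnerProductSpace ℝ E]
  [NormedAddCommGroup F] [NormedSpace ℝ F] {g : E → F}

theorem contDiff_norm_rpow_smul {n : WithTop ℕ∞} (hg : ContDiff ℝ n g)
    (h0 : (0 : E) ∉ tsupport g) (s : ℝ) : ContDiff ℝ n fun x => ‖x‖ ^ s • g x := by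
  rw [contDiff_iff_contDiffAt]
  intro x
  rcases eq_or_ne x 0 with rfl | hx
  · refine (contDiffAt_const (c := (0 : F))).congr_of_eventuallyEq ?_
    filter_upwards [notMem_tsupport_iff_eventuallyEq.mp h0] with y hy
    simp [hy]
  · exact ((contDiffAt_norm ℝ hx).rpow_const_of_ne (norm_ne_zero_iff.mpr hx)).smul hg.contDiffAt

theorem memLp_norm_rpow_smul [MeasurableSpace E] [BorelSpace E] {μ : Measure E}
    [IsFiniteMeasureOnCompacts μ] (hg : Continuous g) (hcs : HasCompactSupport g)
    (h0 : (0 : E) ∉ tsupport g) (s : ℝ) (p : ENNReal) :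
    MemLp (fun x => ‖x‖ ^ s • g x) p μ :=
  (contDiff_norm_rpow_smul (contDiff_zero.mpr hg) h0 s).continuous.memLp_of_hasCompactSupport
    hcs.smul_left

theorem memLp_norm_rpow_smul_fderiv_apply_self [MeasurableSpace E] [BorelSpace E]
    {μ : Measure E} [IsFiniteMeasureOnCompacts μ] (hg : ContDiff ℝ 1 g)
    (hcs : HasCompactSupport g) (h0 : (0 : E) ∉ tsupport g) (s : ℝ) (p : ENNReal) :
    MemLp (fun x => ‖x‖ ^ s • fderiv ℝ g x x) p μ :=
  memLp_norm_rpow_smul ((hg.continuous_fderiv one_ne_zero).clm_apply continuous_id)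
    ((hcs.fderiv ℝ).mono (support_fderiv_apply_self_subset g))
    (fun h => h0 (tsupport_fderiv_apply_self_subset g h)) s p

theorem integral_norm_rpow_mul_norm_fderiv_apply_self_sq_le [MeasurableSpace E] [BorelSpace E]
    {μ : Measure E} [IsFiniteMeasureOnCompacts μ] (hg : ContDiff ℝ 1 g) (hcs : HasCompactSupport g)
    (h0 : (0 : E) ∉ tsupport g) (t : ℝ) :
    ∫ x, ‖x‖ ^ (2 * (t - 1)) * ‖fderiv ℝ g x x‖ ^ 2 ∂μ ≤
      ∫ x, ‖x‖ ^ (2 * t) * ‖fderiv ℝ g x‖ ^ 2 ∂μ := by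
  simp only [← norm_norm_rpow_smul_sq]
  have hL2 := memLp_norm_rpow_smul (μ := μ) (hg.continuous_fderiv one_ne_zero) (hcs.fderiv ℝ)
    (fun h => h0 (tsupport_fderiv_subset ℝ h)) t 2
  refine integral_mono_of_nonneg (.of_forall fun x => by positivity)
    hL2.norm.integrable_sq (.of_forall fun x => ?_)
  rcases eq_or_ne x 0 with rfl | hx
  · simp
  refine pow_le_pow_left₀ (norm_nonneg _) ?_ 2
  rw [norm_smul, norm_smul, rpow_sub_one (norm_ne_zero_iff.mpr hx), norm_div, norm_norm,
    div_mul_eq_mul_div, mul_div_assoc]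
  gcongr
  exact div_le_of_le_mul₀ (norm_nonneg x) (norm_nonneg _) ((fderiv ℝ g x).le_opNorm x)

theorem fderiv_norm_rpow_smul_apply_self {x : E} (hx : x ≠ 0) (hg : DifferentiableAt ℝ g x)
    (s : ℝ) :
    fderiv ℝ (fun y => ‖y‖ ^ s • g y) x x = ‖x‖ ^ s • (s • g x + fderiv ℝ g x x) := by
  have hx' : ‖x‖ ≠ 0 := norm_ne_zero_iff.mpr hx
  have hnorm : DifferentiableAt ℝ (fun y : E => ‖y‖) x :=
    (contDiffAt_norm ℝ hx (n := 1)).differentiableAt one_ne_zero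
  have hpow := hnorm.hasFDerivAt.rpow_const (p := s) (.inl hx')
  have hradial : s * ‖x‖ ^ (s - 1) * fderiv ℝ (fun y : E => ‖y‖) x x = ‖x‖ ^ s * s := by
    rw [hnorm.fderiv_norm_self, rpow_sub_one hx']
    field_simp
  rw [(hpow.fun_smul hg.hasFDerivAt).fderiv]
  simp [hradial, smul_smul, add_comm]

theorem integral_norm_rpow_smul_fderiv_apply_self [FiniteDimensional ℝ E] [MeasurableSpace E]
    [BorelSpace E] {μ : Measure E} [μ.IsAddHaarMeasure] (hg : ContDiff ℝ 1 g)
    (hcs : HasCompactSupport g) (h0 : (0 : E) ∉ tsupport g) (s : ℝ) :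
    ∫ x, ‖x‖ ^ s • fderiv ℝ g x x ∂μ =
      -((finrank ℝ E + s) • ∫ x, ‖x‖ ^ s • g x ∂μ) := by
  have hint : Integrable (fun x => ‖x‖ ^ s • g x) μ :=
    memLp_one_iff_integrable.mp (memLp_norm_rpow_smul hg.continuous hcs h0 s 1)
  have hint' : Integrable (fun x => ‖x‖ ^ s • fderiv ℝ g x x) μ :=
    memLp_one_iff_integrable.mp (memLp_norm_rpow_smul_fderiv_apply_self hg hcs h0 s 1)
  have hfderiv (x : E) : fderiv ℝ (fun y => ‖y‖ ^ s • g y) x x =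
      s • ‖x‖ ^ s • g x + ‖x‖ ^ s • fderiv ℝ g x x := by
    rcases eq_or_ne x 0 with rfl | hx
    · simp [image_eq_zero_of_notMem_tsupport h0]
    · rw [fderiv_norm_rpow_smul_apply_self hx (hg.differentiable one_ne_zero x), smul_add,
        smul_comm]
  have hEuler := integral_fderiv_apply_self (μ := μ) (contDiff_norm_rpow_smul hg h0 s) hcs.smul_left
  simp only [hfderiv] at hEuler
  rw [integral_add (hint.fun_smul s) hint', integral_smul] at hEuler
  rw [add_smul, neg_add, ← hEuler]
  abel

end PowerWeight

section CaffarelliKohnNirenberg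

variable {E F : Type*} [NormedAddCommGroup E] [InnerProductSpace ℝ E] [FiniteDimensional ℝ E]
  [MeasurableSpace E] [BorelSpace E] (μ : Measure E) [μ.IsAddHaarMeasure]
  [NormedAddCommGroup F] [InnerProductSpace ℝ F] {u : E → F}

theorem integral_norm_rpow_mul_inner_fderiv_apply_self (hu : ContDiff ℝ 1 u)
    (hcs : HasCompactSupport u) (h0 : (0 : E) ∉ tsupport u) (s : ℝ) :
    ∫ x, ‖x‖ ^ s * ⟪u x, fderiv ℝ u x x⟫ ∂μ =
      -((finrank ℝ E + s) / 2 * ∫ x, ‖x‖ ^ s * ‖u x‖ ^ 2 ∂μ) := by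
  have hfderiv (x : E) :
      fderiv ℝ (fun y => ‖u y‖ ^ 2) x x = 2 * ⟪u x, fderiv ℝ u x x⟫ := by
    rw [(hu.differentiable one_ne_zero x).hasFDerivAt.norm_sq.fderiv]
    simp
  have h := integral_norm_rpow_smul_fderiv_apply_self (μ := μ) (hu.norm_sq ℝ)
    (hcs.comp_left (g := fun y => ‖y‖ ^ 2) (by simp))
    (fun h => h0 (tsupport_norm_sq_subset u h)) s
  simp only [hfderiv, smul_eq_mul, mul_left_comm _ (2 : ℝ), integral_const_mul] at h
  linarith

theorem sq_integral_norm_rpow_mul_norm_sq_le_radial (hu : ContDiff ℝ 1 u)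
    (hcs : HasCompactSupport u) (h0 : (0 : E) ∉ tsupport u) (s t : ℝ) :
    (finrank ℝ E + (s + t)) ^ 2 / 4 * (∫ x, ‖x‖ ^ (s + t) * ‖u x‖ ^ 2 ∂μ) ^ 2 ≤
      (∫ x, ‖x‖ ^ (2 * s) * ‖u x‖ ^ 2 ∂μ) *
        ∫ x, ‖x‖ ^ (2 * t) * ‖fderiv ℝ u x x‖ ^ 2 ∂μ := by
  have hinner (x : E) : ‖x‖ ^ (s + t) * ⟪u x, fderiv ℝ u x x⟫ =
      ⟪‖x‖ ^ s • u x, ‖x‖ ^ t • fderiv ℝ u x x⟫ := by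
    rcases eq_or_ne x 0 with rfl | hx
    · simp
    · rw [real_inner_smul_left, real_inner_smul_right, rpow_add (norm_pos_iff.mpr hx), mul_assoc]
  calc
    _ = (∫ x, ‖x‖ ^ (s + t) * ⟪u x, fderiv ℝ u x x⟫ ∂μ) ^ 2 := by
      rw [integral_norm_rpow_mul_inner_fderiv_apply_self μ hu hcs h0]
      ring
    _ = (∫ x, ⟪‖x‖ ^ s • u x, ‖x‖ ^ t • fderiv ℝ u x x⟫ ∂μ) ^ 2 := by simp only [hinner]
    _ ≤ (∫ x, ‖‖x‖ ^ s • u x‖ ^ 2 ∂μ) * ∫ x, ‖‖x‖ ^ t • fderiv ℝ u x x‖ ^ 2 ∂μ :=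
      sq_integral_inner_le (memLp_norm_rpow_smul hu.continuous hcs h0 s 2)
        (memLp_norm_rpow_smul_fderiv_apply_self hu hcs h0 t 2)
    _ = _ := by simp only [norm_norm_rpow_smul_sq]

theorem stmt_6_general (hu : ContDiff ℝ 1 u) (hcs : HasCompactSupport u)
    (h0 : (0 : E) ∉ tsupport u) (a b : ℝ) :
    (finrank ℝ E - (a + b + 1)) ^ 2 / 4 * (∫ x, ‖u x‖ ^ 2 / ‖x‖ ^ (a + b + 1) ∂μ) ^ 2 ≤
      (∫ x, ‖u x‖ ^ 2 / ‖x‖ ^ (2 * a) ∂μ) *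
        ∫ x, ‖fderiv ℝ u x‖ ^ 2 / ‖x‖ ^ (2 * b) ∂μ := by
  have hweight (x : E) (r c : ℝ) : r / ‖x‖ ^ c = ‖x‖ ^ (-c) * r := by
    rw [rpow_neg (norm_nonneg x), div_eq_inv_mul]
  simp only [hweight]
  calc
    _ = (finrank ℝ E + (-a + (-b - 1))) ^ 2 / 4 *
          (∫ x, ‖x‖ ^ (-a + (-b - 1)) * ‖u x‖ ^ 2 ∂μ) ^ 2 := by ring_nf
    _ ≤ (∫ x, ‖x‖ ^ (2 * -a) * ‖u x‖ ^ 2 ∂μ) *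
          ∫ x, ‖x‖ ^ (2 * (-b - 1)) * ‖fderiv ℝ u x x‖ ^ 2 ∂μ :=
      sq_integral_norm_rpow_mul_norm_sq_le_radial μ hu hcs h0 (-a) (-b - 1)
    _ ≤ (∫ x, ‖x‖ ^ (2 * -a) * ‖u x‖ ^ 2 ∂μ) *
          ∫ x, ‖x‖ ^ (2 * -b) * ‖fderiv ℝ u x‖ ^ 2 ∂μ :=
      mul_le_mul_of_nonneg_left (integral_norm_rpow_mul_norm_fderiv_apply_self_sq_le hu hcs h0 (-b))
        (integral_nonneg fun x => by positivity)
    _ = _ := by simp only [mul_neg]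

end CaffarelliKohnNirenberg

theorem stmt_6 (N : ℕ) (hN : 1 ≤ N) (a b : ℝ)
    (u : EuclideanSpace ℝ (Fin N) → ℝ)
    (hu : ContDiff ℝ (⊤ : ℕ∞) u) (hcs : HasCompactSupport u)
    (h0 : (0 : EuclideanSpace ℝ (Fin N)) ∉ tsupport u) :
    (∫ x : EuclideanSpace ℝ (Fin N), (u x) ^ 2 / ‖x‖ ^ (2 * a)) *
      (∫ x : EuclideanSpace ℝ (Fin N), ‖gradient u x‖ ^ 2 / ‖x‖ ^ (2 * b))
      ≥ min (((N : ℝ) - (a + b + 1)) ^ 2 / 4) (((N : ℝ) - (3 * b - a + 3)) ^ 2 / 4) *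
        (∫ x : EuclideanSpace ℝ (Fin N), (u x) ^ 2 / ‖x‖ ^ (a + b + 1)) ^ 2 := by
  refine (mul_le_mul_of_nonneg_right (min_le_left _ _) (sq_nonneg _)).trans ?_
  simpa [gradient] using stmt_6_general volume (hu.of_le (by simp)) hcs h0 a b
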